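/- arXiv:2305.17225 — 2 statements merged into one kernel-verified Lean document; each statement's English description precedes it below -/
import Mathlib

section
/- Let G be a DAG on [d] and let P, Q be probability measures on ℝ^d with strictly positive joint densities given by the Markov factorizations p(z) = ∏_{i=1}^d p_i(z_i ∣ z_{pa(i)}) and q(z) = ∏_{i=1}^d q_i(z_i ∣ z_{pa(i)}) for C¹ conditional-density families (p_i), (q_i). Let φ_1,…,φ_d : ℝ → ℝ be strictly monotone C¹ diffeomorphisms and φ(z) := (φ_1(z_1),…,φ_d(z_d)). Then Q = φ_*P if and only if for every i ∈ [d], every z_i ∈ ℝ and every z_{pa(i)} ∈ ℝ^{pa(i)}: p_i(z_i ∣ z_{pa(i)}) = q_i(φ_i(z_i) ∣ φ_{pa(i)}(z_{pa(i)})) · |φ_i′(z_i)|, where φ_{pa(i)} applies φ_j to coordinate j for each j ∈ pa(i). -/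
open MeasureTheory

noncomputable section

/-- `f` depends only on the coordinates in `S`. -/
def DependsOnlyOn {d : ℕ} {α : Type*} (f : (Fin d → ℝ) → α) (S : Finset (Fin d)) : Prop :=
  ∀ z w : Fin d → ℝ, (∀ i ∈ S, z i = w i) → f z = f w

/-- `f` is a C¹ diffeomorphism between (real) normed spaces. -/
def IsC1Diffeo {E F : Type*} [NormedAddCommGroup E] [NormedSpace ℝ E]
    [NormedAddCommGroup F] [NormedSpace ℝ F] (f : E → F) : Prop :=
  ContDiff ℝ 1 f ∧ ∃ g : F → E, ContDiff ℝ 1 g ∧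
    Function.LeftInverse g f ∧ Function.RightInverse g f

/-- The measure on `ℝ^d` with density `ρ` with respect to Lebesgue measure. -/
def densityMeasure {d : ℕ} (ρ : (Fin d → ℝ) → ℝ) : Measure (Fin d → ℝ) :=
  volume.withDensity fun z => ENNReal.ofReal (ρ z)

/-- The measure on `ℝ` with density `r` with respect to Lebesgue measure. -/
def densityMeasure₁ (r : ℝ → ℝ) : Measure ℝ :=
  volume.withDensity fun x => ENNReal.ofReal (r x)

/-- Membership in `S_scaling`: the map acts by an elementwise C¹ diffeomorphism of `ℝ`
on each coordinate. -/
def InSScaling {d : ℕ} (h : (Fin d → ℝ) → (Fin d → ℝ)) : Prop :=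
  ∃ hs : Fin d → ℝ → ℝ, (∀ i, IsC1Diffeo (hs i)) ∧ ∀ (z : Fin d → ℝ) (i : Fin d), h z i = hs i (z i)

/-- Membership in `S_reparam`: a coordinate permutation composed with an element of
`S_scaling`. -/
def InSReparam {d : ℕ} (g : (Fin d → ℝ) → (Fin d → ℝ)) : Prop :=
  ∃ (σ : Equiv.Perm (Fin d)) (hs : Fin d → ℝ → ℝ),
    (∀ i, IsC1Diffeo (hs i)) ∧ ∀ (z : Fin d → ℝ) (i : Fin d), g z i = hs (σ i) (z (σ i))

/-- A C¹ conditional-density family for the DAG on `Fin d` with parent map `pa`: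
each `p i` is strictly positive, C¹, depends only on the coordinates `{i} ∪ pa i`,
and integrates to `1` in the `i`-th coordinate. -/
def IsCondFamily {d : ℕ} (pa : Fin d → Finset (Fin d))
    (p : Fin d → (Fin d → ℝ) → ℝ) : Prop :=
  ∀ i, (∀ z, 0 < p i z) ∧ ContDiff ℝ 1 (p i) ∧
    DependsOnlyOn (p i) (insert i (pa i)) ∧
    ∀ z, (∫ t : ℝ, p i (Function.update z i t)) = 1

/-- A strictly positive C¹ probability density on `ℝ`. -/
def IsC1Density (r : ℝ → ℝ) : Prop :=
  (∀ x, 0 < r x) ∧ ContDiff ℝ 1 r ∧ (∫ x : ℝ, r x) = 1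

/-- The joint density `z ↦ ∏ i, p i z` of a conditional-density family. -/
def jointDensity {d : ℕ} (p : Fin d → (Fin d → ℝ) → ℝ) : (Fin d → ℝ) → ℝ :=
  fun z => ∏ i, p i z

/-- `j` is an ancestor of `i` in the DAG with parent map `pa` (transitive closure of the
parent relation). -/
def IsAnc {d : ℕ} (pa : Fin d → Finset (Fin d)) (j i : Fin d) : Prop :=
  Relation.TransGen (fun a b => a ∈ pa b) j i

/-! Write `Φ` for the componentwise map. Changing variables, `φ_*P = Q` says that `P` has density
`z ↦ q (Φ z) * ∏ i, |(φ i)′ (z i)|`, and this is again a Markov factorization: its mechanisms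
`z ↦ q i (Φ z) * |(φ i)′ (z i)|` are normalized by the one-dimensional change of variables.
Continuous densities of the same measure agree everywhere, so it remains to recover the mechanisms
from the joint density. Integrating out a sink of the graph deletes its factor from the product;
iterating yields the marginal density on every ancestral set, and a mechanism is the quotient of two
such marginals. -/

open Function

section MechanismFamily

variable {ι : Type*} [PartialOrder ι]

theorem exists_notMem_isLowerSet_insert [WellFoundedLT ι] {s : Set ι}
    (hs : IsLowerSet s) (hne : s ≠ Set.univ) : ∃ i ∉ s, IsLowerSet (insert i s) := by
  obtain ⟨i, his, hmin⟩ :=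
    exists_minimal_of_wellFoundedLT (· ∉ s) ((Set.ne_univ_iff_exists_notMem s).mp hne)
  refine ⟨i, his, ?_⟩
  rintro a b hba (rfl | has)
  · by_cases hbs : b ∈ s
    · exact Or.inr hbs
    · exact Or.inl (hba.antisymm (hmin hbs hba))
  · exact Or.inr (hs hba has)

variable {X : ι → Type*} [∀ i, MeasurableSpace (X i)] {μ : ∀ i, Measure (X i)}
  {p r : ι → (∀ i, X i) → ℝ} [DecidableEq ι]

/-- A normalized family of mechanisms for a directed acyclic graph, the factors of a Markov
factorization. The graph enters only through its ancestral order: the `i`-th mechanism may depend on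
all coordinates `j ≤ i`, not just on `i` and its parents. -/
structure IsMechanismFamily (μ : ∀ i, Measure (X i)) (p : ι → (∀ i, X i) → ℝ) : Prop where
  dependsOn_Iic : ∀ i, DependsOn (p i) (Set.Iic i)
  integral_update : ∀ i z, ∫ t, p i (update z i t) ∂μ i = 1

namespace IsMechanismFamily

theorem apply_update_of_not_le (hp : IsMechanismFamily μ p) {i j : ι} (hij : ¬ i ≤ j)
    (z : ∀ i, X i) (t : X i) : p j (update z i t) = p j z :=
  hp.dependsOn_Iic j fun _ hkj => update_of_ne (ne_of_mem_of_not_mem hkj hij) t z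

theorem integral_prod_insert (hp : IsMechanismFamily μ p) {s : Finset ι}
    (hs : IsLowerSet (s : Set ι)) {i : ι} (hi : i ∉ s) (z : ∀ i, X i) :
    ∫ t, ∏ j ∈ insert i s, p j (update z i t) ∂μ i = ∏ j ∈ s, p j z := by
  have split (t : X i) :
      ∏ j ∈ insert i s, p j (update z i t) = p i (update z i t) * ∏ j ∈ s, p j z := by
    rw [Finset.prod_insert hi]
    congr 1
    exact Finset.prod_congr rfl fun j hj =>
      hp.apply_update_of_not_le (fun hij => hi (hs hij hj)) z t
  simp_rw [split]
  rw [integral_mul_const, hp.integral_update, one_mul]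

variable [Fintype ι]

theorem prod_eq_of_isLowerSet (hp : IsMechanismFamily μ p) (hr : IsMechanismFamily μ r)
    (h : ∀ z, ∏ i, p i z = ∏ i, r i z) {s : Finset ι} (hs : IsLowerSet (s : Set ι))
    (z : ∀ i, X i) : ∏ i ∈ s, p i z = ∏ i ∈ s, r i z := by
  induction s using WellFoundedGT.induction generalizing z with
  | ind s ih =>
    rcases eq_or_ne s Finset.univ with rfl | hne
    · exact h z
    obtain ⟨i, his, hlower⟩ :=
      exists_notMem_isLowerSet_insert hs (Finset.coe_eq_univ.not.mpr hne)
    rw [Finset.mem_coe] at his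
    rw [← Finset.coe_insert] at hlower
    rw [← hp.integral_prod_insert hs his z, ← hr.integral_prod_insert hs his z]
    simp_rw [ih (insert i s) (Finset.ssubset_insert his) hlower]

theorem eq_of_prod_eq (hp : IsMechanismFamily μ p) (hr : IsMechanismFamily μ r)
    (hp0 : ∀ i z, p i z ≠ 0) (h : ∀ z, ∏ i, p i z = ∏ i, r i z) : p = r := by
  classical
  funext i z
  let s : Finset ι := {j | j < i}
  have coe_s : (s : Set ι) = Set.Iio i := by ext j; simp [s]
  have hs : IsLowerSet (s : Set ι) := coe_s ▸ isLowerSet_Iio i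
  have hins : IsLowerSet ((insert i s : Finset ι) : Set ι) := by
    rw [Finset.coe_insert, coe_s, Set.Iio_insert]
    exact isLowerSet_Iic i
  have his : i ∉ s := by simp [s]
  have hquot := hp.prod_eq_of_isLowerSet hr h hins z
  rw [Finset.prod_insert his, Finset.prod_insert his,
    ← hp.prod_eq_of_isLowerSet hr h hs z] at hquot
  exact mul_right_cancel₀ (Finset.prod_ne_zero_iff.mpr fun j _ => hp0 j z) hquot

end IsMechanismFamily

end MechanismFamily

section ChangeOfVariables

theorem withDensity_ofReal_eq_iff_of_continuous {X : Type*} [TopologicalSpace X]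
    [MeasurableSpace X] [OpensMeasurableSpace X] {μ : Measure X} [SigmaFinite μ]
    [μ.IsOpenPosMeasure] {f g : X → ℝ} (hf : Continuous f) (hg : Continuous g)
    (hf0 : 0 ≤ f) (hg0 : 0 ≤ g) :
    μ.withDensity (fun x => ENNReal.ofReal (f x)) =
      μ.withDensity (fun x => ENNReal.ofReal (g x)) ↔ f = g := by
  rw [withDensity_eq_iff_of_sigmaFinite (by fun_prop) (by fun_prop),
    Continuous.ae_eq_iff_eq μ (ENNReal.continuous_ofReal.comp' hf)
      (ENNReal.continuous_ofReal.comp' hg), funext_iff, funext_iff]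
  exact forall_congr' fun x => ENNReal.ofReal_eq_ofReal_iff (hf0 x) (hg0 x)

theorem hasFDerivAt_piMap {𝕜 ι : Type*} [NontriviallyNormedField 𝕜] [Finite ι]
    {E F : ι → Type*} [∀ i, NormedAddCommGroup (E i)] [∀ i, NormedSpace 𝕜 (E i)]
    [∀ i, NormedAddCommGroup (F i)] [∀ i, NormedSpace 𝕜 (F i)] {f : ∀ i, E i → F i}
    {f' : ∀ i, E i →L[𝕜] F i} {x : ∀ i, E i} (hf : ∀ i, HasFDerivAt (f i) (f' i) (x i)) :
    HasFDerivAt (Pi.map f) (ContinuousLinearMap.piMap f') x := by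
  have := Fintype.ofFinite ι
  exact hasFDerivAt_pi.mpr fun i => (hf i).comp x (hasFDerivAt_apply i x)

theorem map_withDensity_abs_det_fderiv_mul {E : Type*} [NormedAddCommGroup E] [NormedSpace ℝ E]
    [FiniteDimensional ℝ E] [MeasurableSpace E] [BorelSpace E] (μ : Measure E)
    [μ.IsAddHaarMeasure] {f : E → E} {f' : E → E →L[ℝ] E} (hf' : ∀ x, HasFDerivAt f (f' x) x)
    (hf : Bijective f) (ρ : E → ENNReal) :
    (μ.withDensity fun x => ENNReal.ofReal |(f' x).det| * ρ (f x)).map f = μ.withDensity ρ := by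
  have hfm : Measurable f :=
    (continuous_iff_continuousAt.mpr fun x => (hf' x).continuousAt).measurable
  ext s hs
  rw [Measure.map_apply hfm hs, withDensity_apply _ (hfm hs), withDensity_apply _ hs,
    ← lintegral_image_eq_lintegral_abs_det_fderiv_mul μ (hfm hs)
      (fun x _ => (hf' x).hasFDerivWithinAt) hf.injective.injOn,
    Set.image_preimage_eq s hf.surjective]

theorem integral_abs_deriv_smul_comp {F : Type*} [NormedAddCommGroup F] [NormedSpace ℝ F]
    {f : ℝ → ℝ} (hf : Differentiable ℝ f) (hbij : Bijective f) (g : ℝ → F) :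
    ∫ x, |deriv f x| • g (f x) = ∫ y, g y := by
  simpa only [Set.image_univ, hbij.surjective.range_eq, Measure.restrict_univ] using
    (integral_image_eq_integral_abs_deriv_smul MeasurableSet.univ
      (fun x _ => (hf x).hasDerivAt.hasDerivWithinAt) hbij.injective.injOn g).symm

theorem IsC1Diffeo.bijective {E F : Type*} [NormedAddCommGroup E] [NormedSpace ℝ E]
    [NormedAddCommGroup F] [NormedSpace ℝ F] {f : E → F} (hf : IsC1Diffeo f) : Bijective f :=
  let ⟨_, _, hleft, hright⟩ := hf.2
  ⟨hleft.injective, hright.surjective⟩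

end ChangeOfVariables

section Pullback

variable {ι : Type*} {φ : ι → ℝ → ℝ} {p q : ι → (ι → ℝ) → ℝ}

/-- The mechanisms obtained from `q` by the componentwise change of variables `φ`, whose product is
the density of the pullback along `Pi.map φ` of the measure with density `∏ i, q i`. -/
def pullbackMechanism (φ : ι → ℝ → ℝ) (q : ι → (ι → ℝ) → ℝ) (i : ι) (z : ι → ℝ) : ℝ :=
  q i (Pi.map φ z) * |deriv (φ i) (z i)|

theorem continuous_pullbackMechanism (hφ : ∀ i, ContDiff ℝ 1 (φ i)) {i : ι}
    (hq : Continuous (q i)) : Continuous (pullbackMechanism φ q i) := by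
  have hqφ : Continuous fun z => q i (Pi.map φ z) :=
    hq.comp (.piMap fun j => (hφ j).continuous)
  exact hqφ.mul (((hφ i).continuous_deriv le_rfl).comp (continuous_apply i)).abs

theorem IsMechanismFamily.pullback [PartialOrder ι] [DecidableEq ι]
    (hq : IsMechanismFamily (fun _ => volume) q) (hφ : ∀ i, Differentiable ℝ (φ i))
    (hbij : ∀ i, Bijective (φ i)) :
    IsMechanismFamily (fun _ => volume) (pullbackMechanism φ q) where
  dependsOn_Iic i z w hzw := by
    have hq_eq : q i (Pi.map φ z) = q i (Pi.map φ w) :=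
      hq.dependsOn_Iic i fun j hj => congrArg (φ j) (hzw j hj)
    rw [pullbackMechanism, pullbackMechanism, hq_eq, hzw i Set.self_mem_Iic]
  integral_update i z := by
    calc ∫ t, pullbackMechanism φ q i (update z i t)
        = ∫ t, |deriv (φ i) t| • q i (update (Pi.map φ z) i (φ i t)) := by
          simp only [pullbackMechanism, Pi.map_update, update_self, smul_eq_mul, mul_comm]
      _ = ∫ t, q i (update (Pi.map φ z) i t) :=
          integral_abs_deriv_smul_comp (hφ i) (hbij i) fun t => q i (update (Pi.map φ z) i t)
      _ = 1 := hq.integral_update i (Pi.map φ z)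

variable [Fintype ι]

theorem map_withDensity_prod_pullbackMechanism (hφ : ∀ i, Differentiable ℝ (φ i))
    (hbij : ∀ i, Bijective (φ i)) (q : ι → (ι → ℝ) → ℝ) :
    (volume.withDensity fun z => ENNReal.ofReal (∏ i, pullbackMechanism φ q i z)).map (Pi.map φ) =
      volume.withDensity fun z => ENNReal.ofReal (∏ i, q i z) := by
  let Φ' (z : ι → ℝ) : (ι → ℝ) →L[ℝ] (ι → ℝ) :=
    .piMap fun i => .toSpanSingleton ℝ (deriv (φ i) (z i))
  have hΦ' (z : ι → ℝ) : HasFDerivAt (Pi.map φ) (Φ' z) z :=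
    hasFDerivAt_piMap fun i => (hφ i (z i)).hasDerivAt.hasFDerivAt
  have hdet (z : ι → ℝ) : (Φ' z).det = ∏ i, deriv (φ i) (z i) :=
    (ContinuousLinearMap.det_pi _).trans <| Finset.prod_congr rfl fun i _ =>
      ContinuousLinearMap.det_toSpanSingleton _
  have hdensity (z : ι → ℝ) : ENNReal.ofReal (∏ i, pullbackMechanism φ q i z) =
      ENNReal.ofReal |(Φ' z).det| * ENNReal.ofReal (∏ i, q i (Pi.map φ z)) := by
    rw [hdet, ← ENNReal.ofReal_mul (abs_nonneg _), Finset.abs_prod, mul_comm,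
      ← Finset.prod_mul_distrib]
    rfl
  simp_rw [hdensity]
  exact map_withDensity_abs_det_fderiv_mul volume hΦ' (.piMap hbij)
    fun z => ENNReal.ofReal (∏ i, q i z)

theorem pushforward_iff_mechanisms_transform_general [PartialOrder ι] [DecidableEq ι]
    (hp : IsMechanismFamily (fun _ => volume) p) (hq : IsMechanismFamily (fun _ => volume) q)
    (hpc : ∀ i, Continuous (p i)) (hqc : ∀ i, Continuous (q i))
    (hp0 : ∀ i z, 0 < p i z) (hq0 : ∀ i z, 0 ≤ q i z)
    (hφ : ∀ i, ContDiff ℝ 1 (φ i)) (hbij : ∀ i, Bijective (φ i)) :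
    volume.withDensity (fun z => ENNReal.ofReal (∏ i, q i z)) =
        (volume.withDensity fun z => ENNReal.ofReal (∏ i, p i z)).map (Pi.map φ) ↔
      ∀ i z, p i z = q i (Pi.map φ z) * |deriv (φ i) (z i)| := by
  have hdiff (i : ι) : Differentiable ℝ (φ i) := (hφ i).differentiable one_ne_zero
  have hemb : MeasurableEmbedding (Pi.map φ) :=
    (Continuous.piMap fun i => (hφ i).continuous).measurableEmbedding
      (.piMap fun i => (hbij i).injective)
  rw [← map_withDensity_prod_pullbackMechanism hdiff hbij q, hemb.map_injective.eq_iff,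
    withDensity_ofReal_eq_iff_of_continuous
      (continuous_finsetProd _ fun i _ => continuous_pullbackMechanism hφ (hqc i))
      (continuous_finsetProd _ fun i _ => hpc i)
      (fun z => Finset.prod_nonneg fun i _ => mul_nonneg (hq0 i _) (abs_nonneg _))
      (fun z => Finset.prod_nonneg fun i _ => (hp0 i z).le)]
  constructor
  · intro hprod i z
    exact congrFun₂ (hp.eq_of_prod_eq (hq.pullback hdiff hbij) (fun i z => (hp0 i z).ne')
      fun z => (congrFun hprod z).symm) i z
  · intro h
    exact funext fun z => Finset.prod_congr rfl fun i _ => (h i z).symm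

end Pullback

theorem IsCondFamily.isMechanismFamily {d : ℕ} {pa : Fin d → Finset (Fin d)}
    {p : Fin d → (Fin d → ℝ) → ℝ} (hp : IsCondFamily pa p) (hpa : ∀ i, ∀ j ∈ pa i, j < i) :
    IsMechanismFamily (fun _ => volume) p where
  dependsOn_Iic i z w hzw := (hp i).2.2.1 z w fun j hj =>
    hzw j <| (Finset.mem_insert.mp hj).elim (fun h => h.le) fun h => (hpa i j h).le
  integral_update i := (hp i).2.2.2

/-- **Lemma (change of mechanisms under componentwise reparametrization).** Let `p`, `q` be
C¹ conditional-density families for the DAG with parent map `pa` (topologically ordered),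
with joint measures `P`, `Q`, and let `φ i : ℝ → ℝ` be strictly monotone C¹ diffeomorphisms,
acting componentwise as `z ↦ (φ 1 (z 1), …, φ d (z d))`. Then `Q = φ⁎P` if and only if for
every node `i` and every `z`,
`p i z = q i (φ applied componentwise to z) * |(φ i)′ (z i)|`. -/
theorem pushforward_iff_mechanisms_transform {d : ℕ} (pa : Fin d → Finset (Fin d))
    (hpa : ∀ i : Fin d, ∀ j ∈ pa i, j < i)
    (p q : Fin d → (Fin d → ℝ) → ℝ)
    (hp : IsCondFamily pa p) (hq : IsCondFamily pa q)
    (φ : Fin d → ℝ → ℝ)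
    (hφ : ∀ i, IsC1Diffeo (φ i) ∧ (StrictMono (φ i) ∨ StrictAnti (φ i))) :
    densityMeasure (jointDensity q) =
        Measure.map (fun (z : Fin d → ℝ) (i : Fin d) => φ i (z i))
          (densityMeasure (jointDensity p)) ↔
      ∀ (i : Fin d) (z : Fin d → ℝ),
        p i z = q i (fun j => φ j (z j)) * |deriv (φ i) (z i)| :=
  pushforward_iff_mechanisms_transform_general
    (hp.isMechanismFamily hpa) (hq.isMechanismFamily hpa)
    (fun i => (hp i).2.1.continuous) (fun i => (hq i).2.1.continuous)
    (fun i => (hp i).1) (fun i z => ((hq i).1 z).le)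
    (fun i => (hφ i).1.1) fun i => (hφ i).1.bijective
end
end

section
/- Let G be a DAG on [d]. Let (p_i) and (q_i) be C¹ conditional-density families for G, and for each k ∈ [d] let p̃_k and q̃_k be perfect intervened densities on node k (strictly positive C¹ probability densities on ℝ, depending on z_k only), giving interventional joint densities p^k(z) = p̃_k(z_k)∏_{i≠k}p_i(z_i ∣ z_{pa(i)}) and likewise q^k; let p^0, q^0 be the unintervened joint densities. Assume the interventional discrepancy holds for every node k ∈ [d] in both families. Let f, f′ : ℝ^d → ℝ^d be C¹ diffeomorphisms such that f_*P^k = f′_*Q^k for every k ∈ {0,1,…,d}. Then φ := f′⁻¹ ∘ f ∈ S_scaling: there exist C¹ diffeomorphisms h_1,…,h_d : ℝ → ℝ with φ(z) = (h_1(z_1),…,h_d(z_d)) for all z ∈ ℝ^d. -/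
open MeasureTheory

noncomputable section

/-!
The diffeomorphism `φ = f′⁻¹ ∘ f` carries every `P^k` to `Q^k`. The Jacobian determinant cancels in
the likelihood ratio `p^0 / p^k = p_k / p̃_k`, so the likelihood ratios of `q`, composed with `φ`,
are those of `p`. The `k`-th one depends only on the coordinates up to `k` and, by interventional
discrepancy, genuinely on the `k`-th; the chain rule then forces the Jacobian matrix of `φ` to be
triangular. Pulling back along a triangular map turns a chain-rule factorization of a density into
another one, and such factorizations are unique, so `p̃_k(z_k) = q̃_k(φ_k(z)) |∂_k φ_k(z)|`. Hence
`z_k ↦ φ_k(z)` is the monotone transport map from `p̃_k` to `q̃_k`, whatever the other coordinates.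
-/

section DependsOnlyOn

variable {d : ℕ} {S : Finset (Fin d)} {E : Type*}

lemma DependsOnlyOn.mono {F : (Fin d → ℝ) → E} {T : Finset (Fin d)} (hF : DependsOnlyOn F S)
    (hST : S ⊆ T) : DependsOnlyOn F T :=
  fun z w hzw => hF z w fun i hi => hzw i (hST hi)

variable [NormedAddCommGroup E] [NormedSpace ℝ E] {F : (Fin d → ℝ) → E}

lemma hasDerivAt_comp_update (hF : Differentiable ℝ F) (z : Fin d → ℝ) (l : Fin d) (t : ℝ) :
    HasDerivAt (fun s => F (Function.update z l s))
      (fderiv ℝ F (Function.update z l t) (Pi.single l 1)) t :=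
  (hF _).hasFDerivAt.comp_hasDerivAt t (hasDerivAt_update z l t)

lemma fderiv_apply_eq_sum (F : (Fin d → ℝ) → E) (z v : Fin d → ℝ) :
    fderiv ℝ F z v = ∑ m, v m • fderiv ℝ F z (Pi.single m 1) := by
  conv_lhs => rw [pi_eq_sum_univ' v]
  simp only [map_sum, map_smul]

lemma dependsOnlyOn_iff_fderiv_single_eq_zero (hF : Differentiable ℝ F) :
    DependsOnlyOn F S ↔ ∀ l ∉ S, ∀ z, fderiv ℝ F z (Pi.single l 1) = 0 := by
  refine ⟨fun h l hl z => ?_, fun h z w hzw => ?_⟩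
  · have hconst : (fun t => F (Function.update z l t)) = fun _ => F z :=
      funext fun t => h _ _ fun i hi => Function.update_of_ne (ne_of_mem_of_not_mem hi hl) _ _
    have hderiv := hasDerivAt_comp_update hF z l (z l)
    rw [hconst, Function.update_eq_self] at hderiv
    exact hderiv.unique (hasDerivAt_const _ _)
  · have hderiv (t : ℝ) : HasDerivAt (fun s => F (AffineMap.lineMap z w s)) 0 t := by
      have hzero : fderiv ℝ F (AffineMap.lineMap z w t) (w - z) = 0 := by
        rw [fderiv_apply_eq_sum]
        refine Finset.sum_eq_zero fun m _ => ?_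
        by_cases hm : m ∈ S
        · rw [Pi.sub_apply, hzw m hm, sub_self, zero_smul]
        · rw [h m hm, smul_zero]
      exact hzero ▸ (hF _).hasFDerivAt.comp_hasDerivAt t AffineMap.hasDerivAt_lineMap
    have hconst := is_const_of_deriv_eq_zero (fun t => (hderiv t).differentiableAt)
      (fun t => (hderiv t).deriv) 0 1
    simpa using hconst

end DependsOnlyOn

lemma fderiv_comp_fderiv_of_leftInverse {E F : Type*} [NormedAddCommGroup E] [NormedSpace ℝ E]
    [NormedAddCommGroup F] [NormedSpace ℝ F] {φ : E → F} {ψ : F → E} (hφ : Differentiable ℝ φ)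
    (hψ : Differentiable ℝ ψ) (hψφ : Function.LeftInverse ψ φ) (z : E) :
    (fderiv ℝ ψ (φ z)).comp (fderiv ℝ φ z) = ContinuousLinearMap.id ℝ E := by
  rw [← fderiv_comp z (hψ _) (hφ z), hψφ.comp_eq_id, fderiv_id]

namespace IsC1Diffeo

variable {E F G : Type*} [NormedAddCommGroup E] [NormedSpace ℝ E]
  [NormedAddCommGroup F] [NormedSpace ℝ F] [NormedAddCommGroup G] [NormedSpace ℝ G]

lemma comp {g : F → G} {f : E → F} (hg : IsC1Diffeo g) (hf : IsC1Diffeo f) :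
    IsC1Diffeo (g ∘ f) := by
  obtain ⟨hgC, g', hg'C, hg'l, hg'r⟩ := hg
  obtain ⟨hfC, f', hf'C, hf'l, hf'r⟩ := hf
  exact ⟨hgC.comp hfC, f' ∘ g', hf'C.comp hg'C, hg'l.comp hf'l, hg'r.comp hf'r⟩

lemma isOpenMap {f : E → F} (hf : IsC1Diffeo f) : IsOpenMap f := by
  obtain ⟨-, g, hg, hgl, hgr⟩ := hf
  exact IsOpenMap.of_inverse hg.continuous hgr hgl

variable {φ : E → E}

lemma det_fderiv_ne_zero (hφ : IsC1Diffeo φ) (z : E) : (fderiv ℝ φ z).det ≠ 0 := by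
  obtain ⟨hφC, ψ, hψC, hψφ, -⟩ := hφ
  have hcomp : (fderiv ℝ ψ (φ z)).comp (fderiv ℝ φ z) = ContinuousLinearMap.id ℝ E :=
    fderiv_comp_fderiv_of_leftInverse (hφC.differentiable one_ne_zero)
      (hψC.differentiable one_ne_zero) hψφ z
  have hdet : (fderiv ℝ ψ (φ z)).det * (fderiv ℝ φ z).det = 1 := by
    rw [ContinuousLinearMap.det, ContinuousLinearMap.det, ← LinearMap.det_comp,
      ← ContinuousLinearMap.toLinearMap_comp, hcomp, ContinuousLinearMap.coe_id,
      LinearMap.det_id]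
  exact right_ne_zero_of_mul_eq_one hdet

end IsC1Diffeo

/-- A map is triangular when its `k`-th output depends only on the inputs up to `k`. -/
def IsTriangular {d : ℕ} (φ : (Fin d → ℝ) → (Fin d → ℝ)) : Prop :=
  ∀ k, DependsOnlyOn (fun z => φ z k) (Finset.Iic k)

/-- The `k`-th output of `φ` along the line through `z` in the `k`-th coordinate direction. -/
def slice {d : ℕ} (φ : (Fin d → ℝ) → (Fin d → ℝ)) (z : Fin d → ℝ) (k : Fin d) (t : ℝ) : ℝ :=
  φ (Function.update z k t) k

/-- The `k`-th diagonal entry of the Jacobian matrix of `φ` at `z`. -/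
def diagDeriv {d : ℕ} (φ : (Fin d → ℝ) → (Fin d → ℝ)) (k : Fin d) (z : Fin d → ℝ) : ℝ :=
  fderiv ℝ φ z (Pi.single k 1) k

section Triangular

variable {d : ℕ} {φ ψ : (Fin d → ℝ) → (Fin d → ℝ)}

lemma fderiv_component_apply (hφ : Differentiable ℝ φ) (k : Fin d) (z v : Fin d → ℝ) :
    fderiv ℝ (fun w => φ w k) z v = fderiv ℝ φ z v k := by
  rw [fderiv_apply (hφ z)]
  rfl

lemma isTriangular_iff_isLowerTriangular_fderiv (hφ : Differentiable ℝ φ) :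
    IsTriangular φ ↔
      ∀ z, (LinearMap.toMatrix' (fderiv ℝ φ z).toLinearMap).IsLowerTriangular := by
  have hcomponent (k : Fin d) : Differentiable ℝ fun z => φ z k := differentiable_pi.1 hφ k
  simp only [IsTriangular, dependsOnlyOn_iff_fderiv_single_eq_zero (hcomponent _), Finset.mem_Iic,
    not_le, fderiv_component_apply hφ, Matrix.IsLowerTriangular, Matrix.BlockTriangular,
    OrderDual.toDual_lt_toDual, LinearMap.toMatrix'_apply, ContinuousLinearMap.coe_coe]
  exact ⟨fun h z k l hkl => h k l hkl z, fun h k l hkl z => h z hkl⟩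

lemma hasDerivAt_slice (hφ : Differentiable ℝ φ) (z : Fin d → ℝ) (k : Fin d) (t : ℝ) :
    HasDerivAt (slice φ z k) (diagDeriv φ k (Function.update z k t)) t :=
  hasDerivAt_pi.1 (hasDerivAt_comp_update hφ z k t) k

lemma diagDeriv_eq_deriv_slice (hφ : Differentiable ℝ φ) (k : Fin d) (z : Fin d → ℝ) :
    diagDeriv φ k z = deriv (slice φ z k) (z k) := by
  rw [(hasDerivAt_slice hφ z k (z k)).deriv, Function.update_eq_self]

lemma contDiff_slice (hφ : ContDiff ℝ 1 φ) (z : Fin d → ℝ) (k : Fin d) :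
    ContDiff ℝ 1 (slice φ z k) :=
  contDiff_pi.1 (hφ.comp (contDiff_update (𝕜 := ℝ) (F' := fun _ : Fin d => ℝ) 1 z k)) k

lemma continuous_diagDeriv (hφ : ContDiff ℝ 1 φ) (k : Fin d) : Continuous (diagDeriv φ k) :=
  (continuous_apply k).comp ((hφ.continuous_fderiv one_ne_zero).clm_apply continuous_const)

namespace IsTriangular

lemma det_fderiv (h : IsTriangular φ) (hφ : Differentiable ℝ φ) (z : Fin d → ℝ) :
    (fderiv ℝ φ z).det = ∏ k, diagDeriv φ k z := by
  rw [ContinuousLinearMap.det, ← LinearMap.det_toMatrix', Matrix.det_of_isLowerTriangular _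
    ((isTriangular_iff_isLowerTriangular_fderiv hφ).1 h z)]
  simp only [LinearMap.toMatrix'_apply, ContinuousLinearMap.coe_coe, diagDeriv]

lemma diagDeriv_ne_zero (h : IsTriangular φ) (hφ : IsC1Diffeo φ) (k : Fin d) (z : Fin d → ℝ) :
    diagDeriv φ k z ≠ 0 := by
  have hdet := hφ.det_fderiv_ne_zero z
  rw [h.det_fderiv (hφ.1.differentiable one_ne_zero), Finset.prod_ne_zero_iff] at hdet
  exact hdet k (Finset.mem_univ k)

lemma of_inverse (h : IsTriangular φ) (hφ : Differentiable ℝ φ) (hψ : Differentiable ℝ ψ)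
    (hφψ : Function.RightInverse ψ φ) : IsTriangular ψ := by
  rw [isTriangular_iff_isLowerTriangular_fderiv hψ]
  intro z
  have hmul : LinearMap.toMatrix' (fderiv ℝ φ (ψ z)).toLinearMap *
      LinearMap.toMatrix' (fderiv ℝ ψ z).toLinearMap = 1 := by
    rw [← LinearMap.toMatrix'_comp, ← ContinuousLinearMap.toLinearMap_comp,
      fderiv_comp_fderiv_of_leftInverse hψ hφ hφψ z, ContinuousLinearMap.coe_id,
      LinearMap.toMatrix'_id]
  let := invertibleOfRightInverse _ _ hmul
  rw [← Matrix.inv_eq_right_inv hmul]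
  exact Matrix.blockTriangular_inv_of_blockTriangular
    ((isTriangular_iff_isLowerTriangular_fderiv hφ).1 h (ψ z))

lemma apply_update_of_le (h : IsTriangular φ) (z : Fin d → ℝ) {j k : Fin d} (hjk : j ≤ k) (t : ℝ) :
    φ (Function.update z k t) j = Function.update (φ z) k (slice φ z k t) j := by
  rcases hjk.lt_or_eq with hlt | rfl
  · rw [Function.update_of_ne hlt.ne]
    exact h j _ _ fun i hi =>
      Function.update_of_ne ((Finset.mem_Iic.1 hi).trans_lt hlt).ne _ _
  · rw [Function.update_self, slice]

lemma slice_congr (h : IsTriangular φ) {z w : Fin d → ℝ} {k : Fin d} (hzw : ∀ i < k, z i = w i) :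
    slice φ z k = slice φ w k := by
  funext t
  refine h k _ _ fun i hi => ?_
  rcases (Finset.mem_Iic.1 hi).lt_or_eq with hlt | rfl
  · rw [Function.update_of_ne hlt.ne, Function.update_of_ne hlt.ne, hzw i hlt]
  · rw [Function.update_self, Function.update_self]

lemma leftInverse_slice (hφ : IsTriangular φ) (hψ : IsTriangular ψ)
    (hψφ : Function.LeftInverse ψ φ) (z : Fin d → ℝ) (k : Fin d) :
    Function.LeftInverse (slice ψ (φ z) k) (slice φ z k) := fun t =>
  calc ψ (Function.update (φ z) k (slice φ z k t)) k
      = ψ (φ (Function.update z k t)) k :=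
        hψ k _ _ fun j hj => (hφ.apply_update_of_le z (Finset.mem_Iic.1 hj) t).symm
    _ = t := by rw [hψφ, Function.update_self]

lemma bijective_slice (h : IsTriangular φ) (hφ : IsC1Diffeo φ) (z : Fin d → ℝ) (k : Fin d) :
    Function.Bijective (slice φ z k) := by
  obtain ⟨hφC, ψ, hψC, hψφ, hφψ⟩ := hφ
  have hψ : IsTriangular ψ :=
    h.of_inverse (hφC.differentiable one_ne_zero) (hψC.differentiable one_ne_zero) hφψ
  have hright : Function.LeftInverse (slice φ z k) (slice ψ (φ z) k) := by
    simpa only [hψφ z] using hψ.leftInverse_slice h hφψ (φ z) k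
  exact ⟨(h.leftInverse_slice hψ hψφ z k).injective, hright.surjective⟩

lemma dependsOnlyOn_diagDeriv (h : IsTriangular φ) (hφ : Differentiable ℝ φ) (k : Fin d) :
    DependsOnlyOn (diagDeriv φ k) (Finset.Iic k) := by
  intro z w hzw
  rw [diagDeriv_eq_deriv_slice hφ, diagDeriv_eq_deriv_slice hφ, hzw k (Finset.mem_Iic.2 le_rfl),
    h.slice_congr fun i hi => hzw i (Finset.mem_Iic.2 hi.le)]

end IsTriangular

lemma isTriangular_of_dependsOnlyOn_comp (hφ : ContDiff ℝ 1 φ) {v : Fin d → (Fin d → ℝ) → ℝ}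
    (hv : ∀ k, Differentiable ℝ (v k)) (hv_dep : ∀ k, DependsOnlyOn (v k) (Finset.Iic k))
    (hcomp_dep : ∀ k, DependsOnlyOn (v k ∘ φ) (Finset.Iic k))
    (hdense : ∀ k, Dense {z | fderiv ℝ (v k) (φ z) (Pi.single k 1) ≠ 0}) :
    IsTriangular φ := by
  have hφd : Differentiable ℝ φ := hφ.differentiable one_ne_zero
  have hv_zero {k m : Fin d} (hkm : k < m) (z : Fin d → ℝ) :
      fderiv ℝ (v k) z (Pi.single m 1) = 0 :=
    (dependsOnlyOn_iff_fderiv_single_eq_zero (hv k)).1 (hv_dep k) m (by simpa using hkm) z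
  have hcomp_zero {k l : Fin d} (hkl : k < l) (z : Fin d → ℝ) :
      fderiv ℝ (v k ∘ φ) z (Pi.single l 1) = 0 :=
    (dependsOnlyOn_iff_fderiv_single_eq_zero ((hv k).comp hφd)).1 (hcomp_dep k) l
      (by simpa using hkl) z
  suffices hzero : ∀ k l, k < l → ∀ z, fderiv ℝ φ z (Pi.single l 1) k = 0 from
    (isTriangular_iff_isLowerTriangular_fderiv hφd).2 fun z k l hkl => by
      simpa only [LinearMap.toMatrix'_apply, ContinuousLinearMap.coe_coe] using hzero k l hkl z
  intro k
  induction k using WellFoundedLT.induction with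
  | ind k ih =>
    intro l hkl z
    -- In the chain rule for `v k ∘ φ` only the `k`-th summand survives: the earlier ones vanish
    -- by induction, the later ones because `v k` ignores those coordinates.
    have hchain (z : Fin d → ℝ) :
        fderiv ℝ φ z (Pi.single l 1) k * fderiv ℝ (v k) (φ z) (Pi.single k 1) = 0 := by
      have hsum := hcomp_zero hkl z
      rw [fderiv_comp z (hv k _) (hφd z), ContinuousLinearMap.comp_apply, fderiv_apply_eq_sum,
        Finset.sum_eq_single k] at hsum
      · exact hsum
      · intro m _ hmk
        rcases hmk.lt_or_gt with hlt | hgt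
        · rw [ih m hlt l (hlt.trans hkl) z, zero_smul]
        · rw [hv_zero hgt, smul_zero]
      · exact fun hk => absurd (Finset.mem_univ k) hk
    have hclosed : IsClosed {z | fderiv ℝ φ z (Pi.single l 1) k = 0} :=
      isClosed_eq ((continuous_apply k).comp
        ((hφ.continuous_fderiv one_ne_zero).clm_apply continuous_const)) continuous_const
    exact hclosed.closure_subset_iff.2
      (fun w hw => (mul_eq_zero.1 (hchain w)).resolve_right hw) (hdense k z)

lemma IsC1Diffeo.inSScaling (hφ : IsC1Diffeo φ)
    (hdep : ∀ k, DependsOnlyOn (fun z => φ z k) {k}) : InSScaling φ := by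
  have htri : IsTriangular φ := fun k => (hdep k).mono (by simp)
  have hcoord (z : Fin d → ℝ) (k : Fin d) : φ z k = slice φ 0 k (z k) :=
    hdep k _ _ fun i hi => by rw [Finset.mem_singleton.1 hi, Function.update_self]
  refine ⟨fun k => slice φ 0 k, fun k => ?_, hcoord⟩
  have hinj : Function.Injective (slice φ 0 k) := (htri.bijective_slice hφ 0 k).1
  obtain ⟨hφC, ψ, hψC, -, hφψ⟩ := hφ
  have hright : Function.RightInverse (slice ψ 0 k) (slice φ 0 k) := fun t =>
    calc φ (Function.update 0 k (slice ψ 0 k t)) k = φ (ψ (Function.update 0 k t)) k :=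
          (hcoord _ k).symm
      _ = t := by rw [hφψ, Function.update_self]
  exact ⟨contDiff_slice hφC 0 k, slice ψ 0 k, contDiff_slice hψC 0 k,
    hright.leftInverse_of_injective hinj, hright⟩

end Triangular

section ChangeOfVariables

lemma eq_comp_mul_abs_det_fderiv_of_map_withDensity_eq {E : Type*} [NormedAddCommGroup E]
    [NormedSpace ℝ E] [FiniteDimensional ℝ E] [MeasurableSpace E] [BorelSpace E] (μ : Measure E)
    [μ.IsAddHaarMeasure] {φ : E → E} (hφ : ContDiff ℝ 1 φ) (hinj : Function.Injective φ)
    {ρ σ : E → ℝ} (hρ : Continuous ρ) (hσ : Continuous σ) (hρ0 : ∀ z, 0 ≤ ρ z)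
    (hσ0 : ∀ z, 0 ≤ σ z)
    (hmap : (μ.withDensity fun z => ENNReal.ofReal (ρ z)).map φ =
      μ.withDensity fun z => ENNReal.ofReal (σ z)) (z : E) :
    ρ z = σ (φ z) * |(fderiv ℝ φ z).det| := by
  have hτ : Continuous fun z => σ (φ z) * |(fderiv ℝ φ z).det| :=
    (hσ.comp hφ.continuous).mul
      (ContinuousLinearMap.continuous_det.comp (hφ.continuous_fderiv one_ne_zero)).abs
  have hemb : MeasurableEmbedding φ := hφ.continuous.measurableEmbedding hinj
  have hdensity : (μ.withDensity fun z => ENNReal.ofReal (ρ z)) =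
      μ.withDensity fun z => ENNReal.ofReal (σ (φ z) * |(fderiv ℝ φ z).det|) := by
    ext s hs
    have himage := hemb.measurableSet_image.2 hs
    rw [← hinj.preimage_image s, ← hemb.map_apply, hmap, hinj.preimage_image,
      withDensity_apply _ himage, withDensity_apply _ hs,
      lintegral_image_eq_lintegral_abs_det_fderiv_mul μ hs
        (fun x _ => (hφ.differentiable one_ne_zero x).hasFDerivAt.hasFDerivWithinAt) hinj.injOn]
    refine lintegral_congr fun x => ?_
    rw [mul_comm, ENNReal.ofReal_mul (hσ0 _)]
  rw [withDensity_eq_iff_of_sigmaFinite (by fun_prop)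
    hτ.measurable.ennreal_ofReal.aemeasurable] at hdensity
  refine congrFun ((Continuous.ae_eq_iff_eq μ hρ hτ).1 ?_) z
  filter_upwards [hdensity] with x hx
  exact (ENNReal.ofReal_eq_ofReal_iff (hρ0 x) (mul_nonneg (hσ0 _) (abs_nonneg _))).1 hx

lemma eq_of_comp_mul_deriv_eq {b h₁ h₂ h₁' h₂' : ℝ → ℝ} (hb : Continuous b) (hb0 : ∀ x, 0 < b x)
    (hbi : Integrable b) (hh₁ : ∀ t, HasDerivAt h₁ (h₁' t) t) (hh₂ : ∀ t, HasDerivAt h₂ (h₂' t) t)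
    (heq : ∀ t, b (h₁ t) * h₁' t = b (h₂ t) * h₂' t) {l : Filter ℝ} [l.NeBot]
    (hl₁ : Filter.Tendsto h₁ l Filter.atBot) (hl₂ : Filter.Tendsto h₂ l Filter.atBot) :
    h₁ = h₂ := by
  let cdf (x : ℝ) : ℝ := ∫ y in Set.Iic x, b y
  have hcdf_sub (x y : ℝ) : cdf y - cdf x = ∫ u in x..y, b u :=
    intervalIntegral.integral_Iic_sub_Iic hbi.integrableOn hbi.integrableOn
  have hcdf_mono : StrictMono cdf := fun x y hxy => sub_pos.1 <| hcdf_sub x y ▸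
    intervalIntegral.intervalIntegral_pos_of_pos hbi.intervalIntegrable hb0 hxy
  have hcdf_deriv (x : ℝ) : HasDerivAt cdf (b x) x := by
    have hcdf : cdf = fun y => (∫ u in (0 : ℝ)..y, b u) + cdf 0 :=
      funext fun y => by rw [← hcdf_sub 0 y, sub_add_cancel]
    exact hcdf ▸ (hb.integral_hasStrictDerivAt 0 x).hasDerivAt.add_const (cdf 0)
  have hcdf_lim : Filter.Tendsto cdf Filter.atBot (nhds 0) :=
    tendsto_integral_Iic_zero Filter.tendsto_id
  let gap (t : ℝ) : ℝ := cdf (h₁ t) - cdf (h₂ t)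
  have hgap_deriv (t : ℝ) : HasDerivAt gap 0 t := by
    have hsub := ((hcdf_deriv _).comp t (hh₁ t)).sub ((hcdf_deriv _).comp t (hh₂ t))
    rwa [heq t, sub_self] at hsub
  have hgap_lim : Filter.Tendsto gap l (nhds 0) := by
    have hsub := (hcdf_lim.comp hl₁).sub (hcdf_lim.comp hl₂)
    rwa [sub_self] at hsub
  funext t
  have hgap_const : gap = fun _ => gap t := funext fun s =>
    is_const_of_deriv_eq_zero (fun r => (hgap_deriv r).differentiableAt)
      (fun r => (hgap_deriv r).deriv) s t
  rw [hgap_const] at hgap_lim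
  exact hcdf_mono.injective (sub_eq_zero.1 (tendsto_nhds_unique tendsto_const_nhds hgap_lim))

lemma forall_pos_or_forall_neg_of_continuous {X : Type*} [TopologicalSpace X]
    [PreconnectedSpace X] {D : X → ℝ} (hD : Continuous D) (hD0 : ∀ x, D x ≠ 0) :
    (∀ x, 0 < D x) ∨ ∀ x, D x < 0 := by
  by_contra! h
  obtain ⟨⟨x, hx⟩, y, hy⟩ := h
  obtain ⟨c, hc⟩ := mem_range_of_exists_le_of_exists_ge hD ⟨x, hx⟩ ⟨y, hy⟩
  exact hD0 c hc

lemma dependsOnlyOn_singleton_of_eq_comp_mul_abs_diagDeriv {d : ℕ}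
    {φ : (Fin d → ℝ) → (Fin d → ℝ)} (hφ : IsC1Diffeo φ) (h : IsTriangular φ) {k : Fin d}
    {a b : ℝ → ℝ} (hb : Continuous b) (hb0 : ∀ x, 0 < b x) (hbi : Integrable b)
    (hab : ∀ z, a (z k) = b (φ z k) * |diagDeriv φ k z|) :
    DependsOnlyOn (fun z => φ z k) {k} := by
  have hφd : Differentiable ℝ φ := hφ.1.differentiable one_ne_zero
  have hab_slice (z : Fin d → ℝ) (t : ℝ) :
      b (slice φ z k t) * |diagDeriv φ k (Function.update z k t)| = a t := by
    rw [slice, ← hab, Function.update_self]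
  have hderiv (z : Fin d → ℝ) (t : ℝ) : deriv (slice φ z k) t = _ :=
    (hasDerivAt_slice hφd z k t).deriv
  have hsurj (z : Fin d → ℝ) : Function.Surjective (slice φ z k) := (h.bijective_slice hφ z k).2
  suffices hslice : ∀ z w, slice φ z k = slice φ w k by
    intro z w hzw
    have hval := congrFun (hslice z w) (z k)
    rwa [slice, slice, Function.update_eq_self, hzw k (Finset.mem_singleton_self k),
      Function.update_eq_self] at hval
  intro z w
  -- The slices are all increasing or all decreasing, so they tend to `-∞` along a common filter.
  rcases forall_pos_or_forall_neg_of_continuous (continuous_diagDeriv hφ.1 k)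
    (h.diagDeriv_ne_zero hφ k) with hpos | hneg
  · have hlim (z : Fin d → ℝ) : Filter.Tendsto (slice φ z k) Filter.atBot Filter.atBot :=
      Filter.tendsto_atBot_atBot_of_monotone
        (strictMono_of_deriv_pos fun t => hderiv z t ▸ hpos _).monotone
        fun y => (hsurj z y).imp fun _ hx => hx.le
    refine eq_of_comp_mul_deriv_eq hb hb0 hbi (hasDerivAt_slice hφd z k)
      (hasDerivAt_slice hφd w k) (fun t => ?_) (hlim z) (hlim w)
    simpa only [abs_of_pos (hpos _)] using (hab_slice z t).trans (hab_slice w t).symm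
  · have hlim (z : Fin d → ℝ) : Filter.Tendsto (slice φ z k) Filter.atTop Filter.atBot :=
      Filter.tendsto_atTop_atBot_of_antitone
        (strictAnti_of_deriv_neg fun t => hderiv z t ▸ hneg _).antitone
        fun y => (hsurj z y).imp fun _ hx => hx.le
    refine eq_of_comp_mul_deriv_eq hb hb0 hbi (hasDerivAt_slice hφd z k)
      (hasDerivAt_slice hφd w k) (fun t => ?_) (hlim z) (hlim w)
    simpa only [abs_of_neg (hneg _), mul_neg, neg_inj] using
      (hab_slice z t).trans (hab_slice w t).symm

end ChangeOfVariables

/-- Conditional densities `p k = p(z_k ∣ z_1, …, z_{k-1})` as in the chain rule: the part of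
`IsCondFamily` for the complete DAG that remains meaningful without regularity. The DAG is
forgotten because only its topological order matters, and regularity is dropped because the
pullback of a C¹ family along a C¹ map is merely continuous. -/
structure IsCondDensitySeq {d : ℕ} (p : Fin d → (Fin d → ℝ) → ℝ) : Prop where
  pos : ∀ k z, 0 < p k z
  dependsOnlyOn : ∀ k, DependsOnlyOn (p k) (Finset.Iic k)
  integral_update : ∀ k z, ∫ t, p k (Function.update z k t) = 1

namespace IsCondDensitySeq

variable {d : ℕ} {p q : Fin d → (Fin d → ℝ) → ℝ}

lemma integral_prod_Iic_update (hp : IsCondDensitySeq p) (k : Fin d) (z : Fin d → ℝ) :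
    ∫ t, ∏ j ∈ Finset.Iic k, p j (Function.update z k t) = ∏ j ∈ Finset.Iio k, p j z := by
  have hprod (t : ℝ) : ∏ j ∈ Finset.Iic k, p j (Function.update z k t) =
      p k (Function.update z k t) * ∏ j ∈ Finset.Iio k, p j z := by
    rw [← Finset.Iio_insert, Finset.prod_insert Finset.notMem_Iio_self]
    congr 1
    refine Finset.prod_congr rfl fun j hj => hp.dependsOnlyOn j _ _ fun i hi => ?_
    exact Function.update_of_ne ((Finset.mem_Iic.1 hi).trans_lt (Finset.mem_Iio.1 hj)).ne _ _
  simp only [hprod, integral_mul_const, hp.integral_update, one_mul]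

theorem eq_of_jointDensity_eq (hp : IsCondDensitySeq p) (hq : IsCondDensitySeq q)
    (hpq : jointDensity p = jointDensity q) : p = q := by
  funext k
  induction k using WellFoundedGT.induction with
  | ind k ih =>
    have hIic (z : Fin d → ℝ) : ∏ j ∈ Finset.Iic k, p j z = ∏ j ∈ Finset.Iic k, q j z := by
      have hcompl : ∏ j ∈ (Finset.Iic k)ᶜ, p j z = ∏ j ∈ (Finset.Iic k)ᶜ, q j z :=
        Finset.prod_congr rfl fun j hj => congrFun (ih j (by simpa using hj)) z
      have hjoint : ∏ j, p j z = ∏ j, q j z := congrFun hpq z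
      rw [← Finset.prod_mul_prod_compl (Finset.Iic k), ← Finset.prod_mul_prod_compl (Finset.Iic k),
        hcompl] at hjoint
      exact mul_right_cancel₀ (Finset.prod_pos fun j _ => hq.pos j z).ne' hjoint
    funext z
    have hIio : ∏ j ∈ Finset.Iio k, p j z = ∏ j ∈ Finset.Iio k, q j z := by
      simp only [← hp.integral_prod_Iic_update, ← hq.integral_prod_Iic_update, hIic]
    have hz := hIic z
    rw [← Finset.Iio_insert, Finset.prod_insert Finset.notMem_Iio_self,
      Finset.prod_insert Finset.notMem_Iio_self, hIio] at hz
    exact mul_right_cancel₀ (Finset.prod_pos fun j _ => hq.pos j z).ne' hz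

variable {φ : (Fin d → ℝ) → (Fin d → ℝ)}

lemma comp_mul_abs_diagDeriv (hq : IsCondDensitySeq q) (hφ : IsC1Diffeo φ) (h : IsTriangular φ) :
    IsCondDensitySeq fun k z => q k (φ z) * |diagDeriv φ k z| where
  pos k z := mul_pos (hq.pos k _) (abs_pos.2 (h.diagDeriv_ne_zero hφ k z))
  dependsOnlyOn k z w hzw := by
    have hφ_eq : q k (φ z) = q k (φ w) := hq.dependsOnlyOn k _ _ fun j hj =>
      h j z w fun i hi => hzw i (Finset.Iic_subset_Iic.2 (Finset.mem_Iic.1 hj) hi)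
    simp only [hφ_eq, h.dependsOnlyOn_diagDeriv (hφ.1.differentiable one_ne_zero) k z w hzw]
  integral_update k z := by
    have hbij := h.bijective_slice hφ z k
    have hsubst := integral_image_eq_integral_abs_deriv_smul MeasurableSet.univ
      (fun t _ => (hasDerivAt_slice (hφ.1.differentiable one_ne_zero) z k t).hasDerivWithinAt)
      hbij.injective.injOn fun s => q k (Function.update (φ z) k s)
    rw [Set.image_univ_of_surjective hbij.surjective, setIntegral_univ, setIntegral_univ,
      hq.integral_update] at hsubst
    rw [hsubst]
    congr 1 with t
    rw [smul_eq_mul, mul_comm, hq.dependsOnlyOn k _ _ fun j hj =>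
      h.apply_update_of_le z (Finset.mem_Iic.1 hj) t]

lemma eq_comp_mul_abs_diagDeriv (hp : IsCondDensitySeq p) (hq : IsCondDensitySeq q)
    (hφ : IsC1Diffeo φ) (h : IsTriangular φ)
    (hpq : ∀ z, jointDensity p z = jointDensity q (φ z) * |(fderiv ℝ φ z).det|)
    (k : Fin d) (z : Fin d → ℝ) : p k z = q k (φ z) * |diagDeriv φ k z| := by
  refine congrFun₂ (hp.eq_of_jointDensity_eq (hq.comp_mul_abs_diagDeriv hφ h) ?_) k z
  funext w
  rw [hpq, h.det_fderiv (hφ.1.differentiable one_ne_zero), Finset.abs_prod, jointDensity,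
    jointDensity, Finset.prod_mul_distrib]

end IsCondDensitySeq

section Interventions

variable {d : ℕ} {pa : Fin d → Finset (Fin d)} {p : Fin d → (Fin d → ℝ) → ℝ} {r : ℝ → ℝ}

/-- The family obtained from `p` by a perfect intervention on node `k` with density `r`. -/
def intervene (p : Fin d → (Fin d → ℝ) → ℝ) (k : Fin d) (r : ℝ → ℝ) :
    Fin d → (Fin d → ℝ) → ℝ :=
  Function.update p k fun z => r (z k)

lemma jointDensity_intervene (p : Fin d → (Fin d → ℝ) → ℝ) (k : Fin d) (r : ℝ → ℝ) :
    jointDensity (intervene p k r) = fun z => r (z k) * ∏ i ∈ ({k} : Finset (Fin d))ᶜ, p i z := by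
  funext z
  rw [jointDensity, Fintype.prod_eq_mul_prod_compl k, intervene, Function.update_self]
  congr 1
  refine Finset.prod_congr rfl fun i hi => ?_
  rw [Function.update_of_ne (by simpa using hi)]

/-- The log-likelihood ratio `log (p_k / r)` of the unintervened model against the perfect
intervention on node `k` with density `r`. -/
def logRatio (p : Fin d → (Fin d → ℝ) → ℝ) (k : Fin d) (r : ℝ → ℝ) (z : Fin d → ℝ) : ℝ :=
  Real.log (p k z) - Real.log (r (z k))

lemma logRatio_eq_log_jointDensity_sub (hp : ∀ i z, 0 < p i z) (hr : ∀ x, 0 < r x) (k : Fin d)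
    (z : Fin d → ℝ) : logRatio p k r z =
      Real.log (jointDensity p z) - Real.log (jointDensity (intervene p k r) z) := by
  have hrest : ∏ i ∈ ({k} : Finset (Fin d))ᶜ, p i z ≠ 0 :=
    (Finset.prod_pos fun i _ => hp i z).ne'
  rw [jointDensity_intervene, jointDensity, Fintype.prod_eq_mul_prod_compl k,
    Real.log_mul (hp k z).ne' hrest, Real.log_mul (hr _).ne' hrest, logRatio]
  ring

lemma IsCondFamily.isCondDensitySeq (hp : IsCondFamily pa p) (hpa : ∀ i, ∀ j ∈ pa i, j < i) :
    IsCondDensitySeq p where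
  pos k := (hp k).1
  dependsOnlyOn k := (hp k).2.2.1.mono <|
    Finset.insert_subset (Finset.mem_Iic.2 le_rfl) fun j hj => Finset.mem_Iic.2 (hpa k j hj).le
  integral_update k := (hp k).2.2.2

lemma isCondFamily_intervene (hp : IsCondFamily pa p) (k : Fin d) (hr : IsC1Density r) :
    IsCondFamily pa (intervene p k r) := by
  intro i
  rcases eq_or_ne i k with rfl | hik
  · rw [intervene, Function.update_self]
    refine ⟨fun z => hr.1 _, hr.2.1.comp (contDiff_apply ℝ ℝ i),
      fun z w hzw => congrArg r (hzw i (Finset.mem_insert_self _ _)), fun z => ?_⟩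
    simpa only [Function.update_self] using hr.2.2
  · rw [intervene, Function.update_of_ne hik]
    exact hp i

lemma IsCondFamily.jointDensity_pos (hp : IsCondFamily pa p) (z : Fin d → ℝ) :
    0 < jointDensity p z :=
  Finset.prod_pos fun i _ => (hp i).1 z

lemma IsCondFamily.continuous_jointDensity (hp : IsCondFamily pa p) :
    Continuous (jointDensity p) :=
  continuous_finsetProd _ fun i _ => (hp i).2.1.continuous

lemma IsCondDensitySeq.dependsOnlyOn_logRatio (hp : IsCondDensitySeq p) (k : Fin d)
    (r : ℝ → ℝ) : DependsOnlyOn (logRatio p k r) (Finset.Iic k) := by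
  intro z w hzw
  rw [logRatio, logRatio, hp.dependsOnlyOn k z w hzw, hzw k (Finset.mem_Iic.2 le_rfl)]

lemma IsC1Density.differentiable_log (hr : IsC1Density r) :
    Differentiable ℝ fun t => Real.log (r t) :=
  (hr.2.1.differentiable one_ne_zero).log fun t => (hr.1 t).ne'

lemma IsCondFamily.differentiable_log (hp : IsCondFamily pa p) (k : Fin d) :
    Differentiable ℝ fun z => Real.log (p k z) :=
  ((hp k).2.1.differentiable one_ne_zero).log fun z => ((hp k).1 z).ne'

lemma IsCondFamily.differentiable_logRatio (hp : IsCondFamily pa p) (k : Fin d)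
    (hr : IsC1Density r) : Differentiable ℝ (logRatio p k r) :=
  (hp.differentiable_log k).sub (hr.differentiable_log.comp (differentiable_apply k))

lemma IsCondFamily.fderiv_logRatio_single (hp : IsCondFamily pa p) (k : Fin d)
    (hr : IsC1Density r) (z : Fin d → ℝ) :
    fderiv ℝ (logRatio p k r) z (Pi.single k 1) =
      fderiv ℝ (fun w => Real.log (p k w)) z (Pi.single k 1) -
        deriv (fun t => Real.log (r t)) (z k) := by
  have hlogRatio := hasDerivAt_comp_update (hp.differentiable_logRatio k hr) z k (z k)
  have hsub := (hasDerivAt_comp_update (hp.differentiable_log k) z k (z k)).sub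
    (hr.differentiable_log (z k)).hasDerivAt
  simp only [logRatio, Function.update_self] at hlogRatio
  simpa only [Function.update_eq_self] using hlogRatio.unique hsub

variable {pa' : Fin d → Finset (Fin d)} {q : Fin d → (Fin d → ℝ) → ℝ}
  {φ : (Fin d → ℝ) → (Fin d → ℝ)}

lemma IsCondFamily.jointDensity_eq_of_map_eq (hp : IsCondFamily pa p) (hq : IsCondFamily pa' q)
    (hφ : IsC1Diffeo φ)
    (hmap : (densityMeasure (jointDensity p)).map φ = densityMeasure (jointDensity q))
    (z : Fin d → ℝ) : jointDensity p z = jointDensity q (φ z) * |(fderiv ℝ φ z).det| := by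
  have hφ_inj : Function.Injective φ := hφ.2.elim fun _ hψ => hψ.2.1.injective
  exact eq_comp_mul_abs_det_fderiv_of_map_withDensity_eq volume hφ.1 hφ_inj
    hp.continuous_jointDensity hq.continuous_jointDensity
    (fun w => (hp.jointDensity_pos w).le) (fun w => (hq.jointDensity_pos w).le) hmap z

lemma IsCondFamily.logRatio_comp_of_map_eq (hp : IsCondFamily pa p)
    (hq : IsCondFamily pa' q) (hφ : IsC1Diffeo φ) (k : Fin d) {s : ℝ → ℝ}
    (hr : IsC1Density r) (hs : IsC1Density s)
    (hobs : (densityMeasure (jointDensity p)).map φ = densityMeasure (jointDensity q))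
    (hint : (densityMeasure (jointDensity (intervene p k r))).map φ =
      densityMeasure (jointDensity (intervene q k s))) :
    logRatio q k s ∘ φ = logRatio p k r := by
  funext z
  have hq' : IsCondFamily pa' (intervene q k s) := isCondFamily_intervene hq k hs
  have hdet : |(fderiv ℝ φ z).det| ≠ 0 := abs_ne_zero.2 (hφ.det_fderiv_ne_zero z)
  rw [Function.comp_apply, logRatio_eq_log_jointDensity_sub (fun i => (hq i).1) hs.1,
    logRatio_eq_log_jointDensity_sub (fun i => (hp i).1) hr.1,
    hp.jointDensity_eq_of_map_eq hq hφ hobs,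
    (isCondFamily_intervene hp k hr).jointDensity_eq_of_map_eq hq' hφ hint,
    Real.log_mul (hq.jointDensity_pos _).ne' hdet, Real.log_mul (hq'.jointDensity_pos _).ne' hdet,
    add_sub_add_right_eq_sub]

lemma isTriangular_of_logRatio_comp_eq (hpa : ∀ i, ∀ j ∈ pa i, j < i)
    (hpa' : ∀ i, ∀ j ∈ pa' i, j < i)
    (hp : IsCondFamily pa p) (hq : IsCondFamily pa' q) {r s : Fin d → ℝ → ℝ}
    (hs : ∀ k, IsC1Density (s k))
    (hdisc : ∀ k, ∀ᵐ z : Fin d → ℝ, fderiv ℝ (fun w => Real.log (q k w)) z (Pi.single k 1) ≠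
      deriv (fun t => Real.log (s k t)) (z k))
    (hφ : IsC1Diffeo φ) (hcomp : ∀ k, logRatio q k (s k) ∘ φ = logRatio p k (r k)) :
    IsTriangular φ := by
  refine isTriangular_of_dependsOnlyOn_comp hφ.1 (v := fun k => logRatio q k (s k))
    (fun k => hq.differentiable_logRatio k (hs k))
    (fun k => (hq.isCondDensitySeq hpa').dependsOnlyOn_logRatio k (s k))
    (fun k => hcomp k ▸ (hp.isCondDensitySeq hpa).dependsOnlyOn_logRatio k (r k)) fun k => ?_
  have hdense : Dense {z | fderiv ℝ (logRatio q k (s k)) z (Pi.single k 1) ≠ 0} := by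
    simp only [hq.fderiv_logRatio_single k (hs k), sub_ne_zero]
    exact Measure.dense_of_ae (hdisc k)
  exact hdense.preimage hφ.isOpenMap

theorem inSScaling_of_map_eq (hpa : ∀ i, ∀ j ∈ pa i, j < i) (hpa' : ∀ i, ∀ j ∈ pa' i, j < i)
    (hp : IsCondFamily pa p) (hq : IsCondFamily pa' q) {r s : Fin d → ℝ → ℝ}
    (hr : ∀ k, IsC1Density (r k)) (hs : ∀ k, IsC1Density (s k))
    (hdisc : ∀ k, ∀ᵐ z : Fin d → ℝ, fderiv ℝ (fun w => Real.log (q k w)) z (Pi.single k 1) ≠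
      deriv (fun t => Real.log (s k t)) (z k))
    (hφ : IsC1Diffeo φ)
    (hobs : (densityMeasure (jointDensity p)).map φ = densityMeasure (jointDensity q))
    (hint : ∀ k, (densityMeasure (jointDensity (intervene p k (r k)))).map φ =
      densityMeasure (jointDensity (intervene q k (s k)))) : InSScaling φ := by
  have htri : IsTriangular φ := isTriangular_of_logRatio_comp_eq hpa hpa' hp hq hs hdisc hφ
    fun k => hp.logRatio_comp_of_map_eq hq hφ k (hr k) (hs k) hobs (hint k)
  refine hφ.inSScaling fun k => ?_
  have hp' : IsCondFamily pa (intervene p k (r k)) := isCondFamily_intervene hp k (hr k)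
  have hq' : IsCondFamily pa' (intervene q k (s k)) := isCondFamily_intervene hq k (hs k)
  have hmechanism (z : Fin d → ℝ) : r k (z k) = s k (φ z k) * |diagDeriv φ k z| := by
    simpa only [intervene, Function.update_self] using
      (hp'.isCondDensitySeq hpa).eq_comp_mul_abs_diagDeriv (hq'.isCondDensitySeq hpa') hφ htri
        (hp'.jointDensity_eq_of_map_eq hq' hφ (hint k)) k z
  exact dependsOnlyOn_singleton_of_eq_comp_mul_abs_diagDeriv hφ htri (hs k).2.1.continuous
    (hs k).1 (integrable_of_integral_eq_one (hs k).2.2) hmechanism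

end Interventions

lemma map_comp_eq_of_map_eq {α β γ : Type*} [MeasurableSpace α] [MeasurableSpace β]
    [MeasurableSpace γ] {f : α → γ} {f' : β → γ} {g' : γ → β} (hf : Measurable f)
    (hf' : Measurable f') (hg' : Measurable g') (hinv : Function.LeftInverse g' f')
    {μ : Measure α} {ν : Measure β} (h : μ.map f = ν.map f') : μ.map (g' ∘ f) = ν := by
  rw [← Measure.map_map hg' hf, h, Measure.map_map hg' hf', hinv.comp_eq_id, Measure.map_id]

theorem cauca_perfect_interventions_identifiability_scaling_general {d : ℕ}
    (pa pa' : Fin d → Finset (Fin d))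
    (hpa : ∀ i : Fin d, ∀ j ∈ pa i, j < i) (hpa' : ∀ i : Fin d, ∀ j ∈ pa' i, j < i)
    (p q : Fin d → (Fin d → ℝ) → ℝ)
    (hp : IsCondFamily pa p) (hq : IsCondFamily pa' q)
    (pt qt : Fin d → ℝ → ℝ)
    (hpt : ∀ k, IsC1Density (pt k)) (hqt : ∀ k, IsC1Density (qt k))
    (hdiscq : ∀ k : Fin d, ∀ᵐ (z : Fin d → ℝ) ∂volume,
        fderiv ℝ (fun w => Real.log (q k w)) z (Pi.single k 1) ≠
          deriv (fun t => Real.log (qt k t)) (z k))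
    (f f' g' : (Fin d → ℝ) → (Fin d → ℝ))
    (hf : IsC1Diffeo f) (hf' : ContDiff ℝ 1 f') (hg' : ContDiff ℝ 1 g')
    (hinv₁ : Function.LeftInverse g' f') (hinv₂ : Function.RightInverse g' f')
    (hmatch0 : Measure.map f (densityMeasure (jointDensity p)) =
        Measure.map f' (densityMeasure (jointDensity q)))
    (hmatch : ∀ k : Fin d,
        Measure.map f (densityMeasure fun z =>
            pt k (z k) * ∏ i ∈ ({k} : Finset (Fin d))ᶜ, p i z) =
        Measure.map f' (densityMeasure fun z =>
            qt k (z k) * ∏ i ∈ ({k} : Finset (Fin d))ᶜ, q i z)) :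
    InSScaling (g' ∘ f) := by
  have hφ : IsC1Diffeo (g' ∘ f) := IsC1Diffeo.comp ⟨hg', f', hf', hinv₂, hinv₁⟩ hf
  have hpush {μ ν : Measure (Fin d → ℝ)} (h : μ.map f = ν.map f') : μ.map (g' ∘ f) = ν :=
    map_comp_eq_of_map_eq hf.1.continuous.measurable hf'.continuous.measurable
      hg'.continuous.measurable hinv₁ h
  refine inSScaling_of_map_eq hpa hpa' hp hq hpt hqt hdiscq hφ (hpush hmatch0) fun k => ?_
  rw [jointDensity_intervene, jointDensity_intervene]
  exact hpush (hmatch k)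

/-- **Theorem 1 (ii).** CauCA with one perfect stochastic single-node intervention per node,
satisfying interventional discrepancy in both models: if the two models generate the same
pushforward distributions in the unintervened regime and in every interventional regime,
then `φ := f′⁻¹ ∘ f ∈ S_scaling`. -/
theorem cauca_perfect_interventions_identifiability_scaling {d : ℕ}
    (pa : Fin d → Finset (Fin d))
    (hpa : ∀ i : Fin d, ∀ j ∈ pa i, j < i)
    (p q : Fin d → (Fin d → ℝ) → ℝ)
    (hp : IsCondFamily pa p) (hq : IsCondFamily pa q)
    (pt qt : Fin d → ℝ → ℝ)
    (hpt : ∀ k, IsC1Density (pt k)) (hqt : ∀ k, IsC1Density (qt k))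
    (hdiscp : ∀ k : Fin d, ∀ᵐ (z : Fin d → ℝ) ∂volume,
        fderiv ℝ (fun w => Real.log (p k w)) z (Pi.single k 1) ≠
          deriv (fun t => Real.log (pt k t)) (z k))
    (hdiscq : ∀ k : Fin d, ∀ᵐ (z : Fin d → ℝ) ∂volume,
        fderiv ℝ (fun w => Real.log (q k w)) z (Pi.single k 1) ≠
          deriv (fun t => Real.log (qt k t)) (z k))
    (f f' g' : (Fin d → ℝ) → (Fin d → ℝ))
    (hf : IsC1Diffeo f) (hf' : ContDiff ℝ 1 f') (hg' : ContDiff ℝ 1 g')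
    (hinv₁ : Function.LeftInverse g' f') (hinv₂ : Function.RightInverse g' f')
    (hmatch0 : Measure.map f (densityMeasure (jointDensity p)) =
        Measure.map f' (densityMeasure (jointDensity q)))
    (hmatch : ∀ k : Fin d,
        Measure.map f (densityMeasure fun z =>
            pt k (z k) * ∏ i ∈ ({k} : Finset (Fin d))ᶜ, p i z) =
        Measure.map f' (densityMeasure fun z =>
            qt k (z k) * ∏ i ∈ ({k} : Finset (Fin d))ᶜ, q i z)) :
    InSScaling (g' ∘ f) :=
  cauca_perfect_interventions_identifiability_scaling_general pa pa hpa hpa p q hp hq pt qt hpt hqt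
    hdiscq f f' g' hf hf' hg' hinv₁ hinv₂ hmatch0 hmatch
end
end
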